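/- For every causal model M and all Y, X, Z ⊆ V, y ∈ R(Y), x ∈ R(X), z ∈ R(Z) with P_M(z) > 0: the conditional B-probability of the basic counterfactual equals the conditional probability computed in the PO-SCM: P^B(y_x | z) = P^N(y_x | z). -/

import Mathlib

/-!
Both sides are averages over the worlds `a` of `M` compatible with `Z = zv`, so it suffices to
compare them world by world. Exogenous variables are roots, so conditioning on their values
amounts to intervening on them; hence the probability of a counterfactual given `a` is a plain sum
of truncated factorizations over the worlds `w` that satisfy it. In the PO-SCM the truncated
factorization at `w` is the indicator that the potential outcomes `φ` solve the structural
equations at `w`, except those of `X`. After exchanging the sums, what remains is the probability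
that `φ` solves the equations both at `a` (without intervention) and at `w` (under `do(X = xv)`).
It factors over the independent potential outcomes: where the parents of a variable have different
values in `a` and `w`, two distinct potential outcomes are read, each contributing its conditional
probability; where they have the same value, a single one is read and must produce both values,
which contributes the conditional probability at `a` times the point mass that the actualized
refinement puts there.
-/

open Finset

noncomputable section

attribute [local instance] Classical.propDecidable

/-- An assignment of values to the variables. -/
abbrev Asg {ν : Type} (Val : ν → Type) : Type := (i : ν) → Val i

/-- A probabilistic causal model (a causal Bayesian network with explicit exogenous
variables): a signature (variables `ν` with value sets `Val`), a graph given by the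
parent map `pa` (with `ord` a witness of acyclicity, and the variables in `exo` being
the roots), and a joint probability distribution that is Markov relative to the graph,
presented by the conditional probability table `cpt i w x = P(i = x | pa i = w|_{pa i})`
of each variable given its parents (for exogenous variables this is the marginal). -/
structure CM (ν : Type) (Val : ν → Type) : Type where
  exo : Finset ν
  pa : ν → Finset ν
  ord : ν → ℕ
  cpt : (i : ν) → Asg Val → Val i → ℝ

/-- A basic counterfactual event `(Y = yv)_{X ← xv}`. -/
structure CFEvent (ν : Type) (Val : ν → Type) : Type where
  X : Finset ν
  xv : Asg Val
  Y : Finset ν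
  yv : Asg Val

namespace CM

variable {ν : Type} {Val : ν → Type}

/-- Well-formedness of a causal model: exogenous variables are roots, the graph is
acyclic, the conditional probability table of each variable depends only on its
parents, and each table is a probability distribution. -/
structure WF [Fintype ν] [∀ i, Fintype (Val i)] (M : CM ν Val) : Prop where
  pa_exo : ∀ i ∈ M.exo, M.pa i = ∅
  acyclic : ∀ i j, j ∈ M.pa i → M.ord j < M.ord i
  cpt_pa : ∀ (i : ν) (w w' : Asg Val) (x : Val i),
    (∀ j ∈ M.pa i, w j = w' j) → M.cpt i w x = M.cpt i w' x
  cpt_nonneg : ∀ i w x, 0 ≤ M.cpt i w x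
  cpt_sum : ∀ i w, ∑ x, M.cpt i w x = 1

variable [Fintype ν] [∀ i, Fintype (Val i)] [∀ i, Nonempty (Val i)]

variable (M : CM ν Val)

/-- The joint distribution `P(U = u, V = v)` (Markov factorization). -/
def joint (w : Asg Val) : ℝ := ∏ i, M.cpt i w (w i)

/-- The interventional distribution `P_{do(X = xv)}` (truncated factorization). -/
def pdo (X : Finset ν) (xv w : Asg Val) : ℝ :=
  if ∀ i ∈ X, w i = xv i then ∏ i ∈ Xᶜ, M.cpt i w (w i) else 0

/-- `P_{do(X = xv)}(Y = yv | U = u)`, where `u` is the exogenous part of `w`: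
the probability of the basic counterfactual `(Y = yv)_{X ← xv}` given the world `w`. -/
def cfBasic (X : Finset ν) (xv : Asg Val) (Y : Finset ν) (yv : Asg Val) (w : Asg Val) : ℝ :=
  (∑ w' : Asg Val,
      if (∀ i ∈ M.exo, w' i = w i) ∧ ∀ i ∈ Y, w' i = yv i then M.pdo X xv w' else 0) /
  (∑ w' : Asg Val, if ∀ i ∈ M.exo, w' i = w i then M.pdo X xv w' else 0)

/-- The probability of a complex counterfactual
`P(y_x, …, z_w) = Σ_{(u,v)} P(y_x | u,v) ⋯ P(z_w | u,v) P(u,v)`. -/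
def cfProb (evs : List (CFEvent ν Val)) : ℝ :=
  ∑ w : Asg Val, (evs.map fun e => M.cfBasic e.X e.xv e.Y e.yv w).prod * M.joint w

/-- Conditional probability of a complex counterfactual given an actual event `Z = zv`:
`P(y_x, …, z_w | Z = zv) = P(y_x, …, z_w, Z = zv) / P(Z = zv)`. -/
def cfProbCond (evs : List (CFEvent ν Val)) (Z : Finset ν) (zv : Asg Val) : ℝ :=
  (∑ w : Asg Val,
      (if ∀ i ∈ Z, w i = zv i then (evs.map fun e => M.cfBasic e.X e.xv e.Y e.yv w).prod
       else 0) * M.joint w) /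
  (∑ w : Asg Val, if ∀ i ∈ Z, w i = zv i then M.joint w else 0)

/-- `M` is a structural causal model: every endogenous variable is a deterministic
function of its parents (the exogenous variables are automatically mutually
independent in this presentation). -/
def IsSCM : Prop :=
  ∀ i ∉ M.exo, ∀ (w : Asg Val) (x : Val i), M.cpt i w x = 0 ∨ M.cpt i w x = 1

/-- The actualized refinement `M^{(u,v)}` of `M` at the actual world `a`:
for each endogenous variable, the conditional distribution given the *actual* values of
its parents is replaced by the point mass at the actual value of the variable. -/
def refine (a : Asg Val) : CM ν Val where
  exo := M.exo
  pa := M.pa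
  ord := M.ord
  cpt := fun i w x =>
    if i ∉ M.exo ∧ ∀ j ∈ M.pa i, w j = a j then (if x = a i then 1 else 0)
    else M.cpt i w x

/-- The B-semantics probability of a basic counterfactual,
`P^B((Y = yv)_{X ← xv} | a) = (P^{a})_{do(X = xv)}(Y = yv | U = u)` where `u` is the
exogenous part of the actual world `a`. -/
def pbBasic (a : Asg Val) (X : Finset ν) (xv : Asg Val) (Y : Finset ν) (yv : Asg Val) : ℝ :=
  (M.refine a).cfBasic X xv Y yv a

/-- The B-semantics probability of a complex counterfactual. -/
def pbProb (evs : List (CFEvent ν Val)) : ℝ :=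
  ∑ w : Asg Val, (evs.map fun e => M.pbBasic w e.X e.xv e.Y e.yv).prod * M.joint w

/-- The conditional B-semantics probability of a complex counterfactual given `Z = zv`. -/
def pbProbCond (evs : List (CFEvent ν Val)) (Z : Finset ν) (zv : Asg Val) : ℝ :=
  (∑ w : Asg Val,
      (if ∀ i ∈ Z, w i = zv i then (evs.map fun e => M.pbBasic w e.X e.xv e.Y e.yv).prod
       else 0) * M.joint w) /
  (∑ w : Asg Val, if ∀ i ∈ Z, w i = zv i then M.joint w else 0)

/-- An assignment of values to the parents of `i`. -/
def PaAsg (i : ν) : Type := (j : {j : ν // j ∈ M.pa i}) → Val j.1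

instance (i : ν) : Fintype (M.PaAsg i) := by unfold PaAsg; infer_instance
instance (i : ν) : Nonempty (M.PaAsg i) := ⟨fun j => Classical.arbitrary (Val j.1)⟩

/-- Extend an assignment of the parents of `i` to a full assignment (arbitrarily). -/
def extendPa (i : ν) (κ : M.PaAsg i) : Asg Val :=
  fun j => if h : j ∈ M.pa i then κ ⟨j, h⟩ else Classical.arbitrary (Val j)

/-- The index type of the potential outcome variables `X_{pa_X}` of the PO-SCM:
one for each endogenous variable `X` and each value `pa_X` of its parents. -/
def POI : Type := Σ i : {i : ν // i ∉ M.exo}, M.PaAsg i.1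

instance : Fintype (POI M) := by unfold POI; infer_instance

/-- The value set of the potential outcome variable `X_{pa_X}` is that of `X`. -/
def POB : POI M → Type := fun p => Val p.1.1

instance (p : POI M) : Fintype (POB M p) := by unfold POB; infer_instance
instance (p : POI M) : Nonempty (POB M p) := by unfold POB; infer_instance

/-- The type of values of the response variable `U_X` of the canonical frame:
functions from values of the parents of `X` to values of `X`. -/
def RType (i : ν) : Type := M.PaAsg i → Val i

instance (i : ν) : Fintype (M.RType i) := by unfold RType; infer_instance
instance (i : ν) : Nonempty (M.RType i) := ⟨fun _ => Classical.arbitrary (Val i)⟩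

/-- The index type of the response variables of the canonical frame:
one for each endogenous variable. -/
def RVI : Type := {i : ν // i ∉ M.exo}

instance : Fintype (RVI M) := by unfold RVI; infer_instance

/-- The value set of the response variable `U_X`. -/
def RB : RVI M → Type := fun p => M.RType p.1

instance (p : RVI M) : Fintype (RB M p) := by unfold RB; infer_instance
instance (p : RVI M) : Nonempty (RB M p) := by unfold RB; infer_instance

end CM

/-- The family of value sets of an extended signature `ν ⊕ β`. -/
def SumVal {ν β : Type} (Val : ν → Type) (B : β → Type) : ν ⊕ β → Type := fun i =>
  match i with
  | .inl j => Val j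
  | .inr b => B b

section SumValInst

variable {ν β : Type} {Val : ν → Type} {B : β → Type}

instance [∀ i, Fintype (Val i)] [∀ b, Fintype (B b)] (i : ν ⊕ β) :
    Fintype (SumVal Val B i) := by
  cases i with
  | inl j => exact inferInstanceAs (Fintype (Val j))
  | inr b => exact inferInstanceAs (Fintype (B b))

instance [∀ i, Nonempty (Val i)] [∀ b, Nonempty (B b)] (i : ν ⊕ β) :
    Nonempty (SumVal Val B i) := by
  cases i with
  | inl j => exact inferInstanceAs (Nonempty (Val j))
  | inr b => exact inferInstanceAs (Nonempty (B b))

/-- Lift an assignment on `ν` to one on `ν ⊕ β` (arbitrary on the new variables). -/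
def liftAsg [∀ b, Nonempty (B b)] (xv : Asg Val) : Asg (SumVal Val B) := fun i =>
  match i with
  | .inl j => xv j
  | .inr b => Classical.arbitrary (B b)

/-- Lift a counterfactual event on the original variables to the extended signature. -/
def liftCFEvent [∀ b, Nonempty (B b)] (e : CFEvent ν Val) : CFEvent (ν ⊕ β) (SumVal Val B) :=
  ⟨e.X.image Sum.inl, liftAsg e.xv, e.Y.image Sum.inl, liftAsg e.yv⟩

variable [Fintype ν] [Fintype β] [∀ i, Fintype (Val i)] [∀ b, Fintype (B b)]
  [∀ i, Nonempty (Val i)] [∀ b, Nonempty (B b)]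

/-- The probability, computed in a model `N` over an extended signature, of a complex
counterfactual over the original variables. -/
def extProb (N : CM (ν ⊕ β) (SumVal Val B)) (evs : List (CFEvent ν Val)) : ℝ :=
  N.cfProb (evs.map liftCFEvent)

/-- The probability, computed in a model `N` over an extended signature, of a complex
counterfactual over the original variables, conditional on an actual event `Z = zv`
over the original variables. -/
def extProbCond (N : CM (ν ⊕ β) (SumVal Val B)) (evs : List (CFEvent ν Val))
    (Z : Finset ν) (zv : Asg Val) : ℝ :=
  N.cfProbCond (evs.map liftCFEvent) (Z.image Sum.inl) (liftAsg zv)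

/-- The probability, computed in a model `N` over an extended signature, of a basic
counterfactual conditional on the values `a` of *all* the original variables
(marginalizing over the added exogenous variables), via the law of total probability. -/
def extBasicCond (N : CM (ν ⊕ β) (SumVal Val B)) (a : Asg Val)
    (X : Finset ν) (xv : Asg Val) (Y : Finset ν) (yv : Asg Val) : ℝ :=
  (∑ w : Asg (SumVal Val B),
      if ∀ i : ν, w (Sum.inl i) = a i then
        N.cfBasic (X.image Sum.inl) (liftAsg xv) (Y.image Sum.inl) (liftAsg yv) w * N.joint w
      else 0) /
  (∑ w : Asg (SumVal Val B), if ∀ i : ν, w (Sum.inl i) = a i then N.joint w else 0)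

end SumValInst

namespace CM

variable {ν : Type} {Val : ν → Type} [Fintype ν] [∀ i, Fintype (Val i)] [∀ i, Nonempty (Val i)]
variable (M : CM ν Val)

/-- The PO-SCM `M^N` of `M`: the structural causal model obtained from `M` by adding,
for each endogenous variable `X` and each value `pa_X` of its parents, an exogenous
potential outcome variable `X_{pa_X}` (with marginal `P_M(X | Pa_X = pa_X)`, all
exogenous variables mutually independent), and the structural equation
`X = X_{pa_X}` whenever `Pa_X = pa_X`. -/
def MN : CM (ν ⊕ POI M) (SumVal Val (POB M)) where
  exo := (M.exo.image Sum.inl) ∪ (univ.image Sum.inr)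
  pa := fun i =>
    match i with
    | .inl j => ((M.pa j).image Sum.inl) ∪
        ((univ.filter fun p : POI M => p.1.1 = j).image Sum.inr)
    | .inr _ => ∅
  ord := fun i =>
    match i with
    | .inl j => M.ord j + 1
    | .inr _ => 0
  cpt := fun i =>
    match i with
    | .inl j => fun w x =>
        if h : j ∈ M.exo then M.cpt j (fun k => w (Sum.inl k)) x
        else if x = w (Sum.inr ⟨⟨j, h⟩, fun k => w (Sum.inl k.1)⟩) then 1 else 0
    | .inr p => fun _ x => M.cpt p.1.1 (M.extendPa p.1.1 p.2) x

/-- `P^N(y_x, …, z_w)`: the probability of a complex counterfactual computed in the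
PO-SCM `M^N`. -/
def pnProb (evs : List (CFEvent ν Val)) : ℝ := extProb M.MN evs

/-- `P^N(y_x, …, z_w | Z = zv)`: the conditional probability of a complex
counterfactual computed in the PO-SCM `M^N`, given an actual event on the
endogenous variables. -/
def pnProbCond (evs : List (CFEvent ν Val)) (Z : Finset ν) (zv : Asg Val) : ℝ :=
  extProbCond M.MN evs Z zv

/-- `P^N((Y = yv)_{X ← xv} | U = u, V = v)`: the probability of a basic counterfactual
computed in the PO-SCM `M^N`, conditional on the exogenous and endogenous variables of
`M` only (marginalizing over the potential outcome variables). -/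
def pnBasicCond (a : Asg Val) (X : Finset ν) (xv : Asg Val) (Y : Finset ν) (yv : Asg Val) : ℝ :=
  extBasicCond M.MN a X xv Y yv

/-- A canonical SCM for `M`, determined by a distribution `q` of the response variables:
the SCM over the canonical frame, which adds for each endogenous variable `X` an
exogenous response variable `U_X` ranging over the functions `f_X : R(Pa_X) → R(X)`,
with the structural equation `X = f_X(Pa_X)` where `f_X` is the value of `U_X`. -/
def canonSCM (q : (p : RVI M) → RType M p.1 → ℝ) : CM (ν ⊕ RVI M) (SumVal Val (RB M)) where
  exo := (M.exo.image Sum.inl) ∪ (univ.image Sum.inr)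
  pa := fun i =>
    match i with
    | .inl j => ((M.pa j).image Sum.inl) ∪
        ((univ.filter fun p : RVI M => p.1 = j).image Sum.inr)
    | .inr _ => ∅
  ord := fun i =>
    match i with
    | .inl j => M.ord j + 1
    | .inr _ => 0
  cpt := fun i =>
    match i with
    | .inl j => fun w x =>
        if h : j ∈ M.exo then M.cpt j (fun k => w (Sum.inl k)) x
        else if x = w (Sum.inr ⟨j, h⟩) (fun k => w (Sum.inl k.1)) then 1 else 0
    | .inr p => fun _ x => q p x

/-- `q` is the distribution of the response variables of a canonical SCM for `M`:
it is a probability distribution (the response variables being mutually independent and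
independent of the exogenous variables of `M`, whose distribution is kept), and it
reproduces the conditional probability tables of `M`:
`P_M(X = x | Pa_X = pa_X) = Σ_{f_X with f_X(pa_X) = x} P(U_X = f_X)`. -/
def IsCanonicalDist (q : (p : RVI M) → RType M p.1 → ℝ) : Prop :=
  (∀ p x, 0 ≤ q p x) ∧ (∀ p, ∑ f, q p f = 1) ∧
  ∀ (p : RVI M) (κ : M.PaAsg p.1) (x : Val p.1),
    M.cpt p.1 (M.extendPa p.1 κ) x = ∑ f ∈ univ.filter (fun f : RType M p.1 => f κ = x), q p f

/-- The distribution of the response variables of the GH-SCM: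
`P(U_X = f_X) = ∏_{pa_X} P_M(X = f_X(pa_X) | Pa_X = pa_X)`. -/
def qGH : (p : RVI M) → RType M p.1 → ℝ := fun p f =>
  ∏ κ : M.PaAsg p.1, M.cpt p.1 (M.extendPa p.1 κ) (f κ)

end CM

/-- A default assignment. -/
def dfltAsg {ν : Type} (Val : ν → Type) [∀ i, Nonempty (Val i)] : Asg Val :=
  fun i => Classical.arbitrary (Val i)

namespace CM

section Exogenous

variable {ν : Type} {Val : ν → Type}

/-- The probability `P(U = u)` of the exogenous part `u` of the world `a`. -/
def exoProb (M : CM ν Val) (a : Asg Val) : ℝ := ∏ i ∈ M.exo, M.cpt i a (a i)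

theorem exoProb_refine [Fintype ν] (M : CM ν Val) (a b : Asg Val) :
    (M.refine a).exoProb b = M.exoProb b :=
  prod_congr rfl fun _ hi => if_neg fun h => h.1 hi

end Exogenous

/-! ### Truncated factorizations -/

section TruncatedFactorization

variable {ν : Type} {Val : ν → Type} [Fintype ν] [∀ i, Fintype (Val i)] {M : CM ν Val}

theorem WF.exists_notMem_pa_subset (hM : M.WF) {X : Finset ν} (hX : X ≠ univ) :
    ∃ i ∉ X, M.pa i ⊆ X := by
  obtain ⟨i, hi, hmin⟩ := exists_min_image Xᶜ M.ord (nonempty_iff_ne_empty.mpr (by simpa))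
  refine ⟨i, mem_compl.mp hi, fun j hj => ?_⟩
  by_contra hjX
  exact (hM.acyclic i j hj).not_ge (hmin j (mem_compl.mpr hjX))

theorem WF.pdo_eq_sum_pdo_insert (hM : M.WF) {X : Finset ν} {i : ν} (hi : i ∉ X)
    (hpa : M.pa i ⊆ X) (xv w : Asg Val) :
    M.pdo X xv w = ∑ x, M.cpt i xv x * M.pdo (insert i X) (Function.update xv i x) w := by
  have clamped_insert (x : Val i) :
      (∀ j ∈ insert i X, w j = Function.update xv i x j) ↔ w i = x ∧ ∀ j ∈ X, w j = xv j := by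
    rw [forall_mem_insert, Function.update_self]
    refine and_congr_right fun _ => forall₂_congr fun j hj => ?_
    rw [Function.update_of_ne (ne_of_mem_of_not_mem hj hi)]
  simp only [pdo, clamped_insert]
  by_cases hw : ∀ j ∈ X, w j = xv j
  · simp only [if_pos hw, and_iff_left hw, mul_ite, mul_zero, sum_ite_eq, mem_univ, if_true]
    rw [← hM.cpt_pa i w xv (w i) fun j hj => hw j (hpa hj), compl_insert,
      mul_prod_erase _ (fun j => M.cpt j w (w j)) (mem_compl.mpr hi)]
  · simp only [hw, and_false, if_false, mul_zero, sum_const_zero]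

/-- The variables are clamped one at a time, each after its parents, so that the table of the
variable being clamped is constant over the remaining sum. -/
theorem WF.sum_pdo (hM : M.WF) (X : Finset ν) (xv : Asg Val) : ∑ w, M.pdo X xv w = 1 := by
  induction X using WellFoundedGT.induction generalizing xv with
  | ind X ih =>
    by_cases hX : X = univ
    · simp [pdo, hX, ← funext_iff]
    · obtain ⟨i, hi, hpa⟩ := hM.exists_notMem_pa_subset hX
      simp only [hM.pdo_eq_sum_pdo_insert hi hpa xv]
      rw [sum_comm]
      simp only [← mul_sum, ih _ (ssubset_insert hi), mul_one]
      exact hM.cpt_sum i xv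

theorem WF.exoProb_congr (hM : M.WF) {w a : Asg Val} (h : ∀ i ∈ M.exo, w i = a i) :
    M.exoProb w = M.exoProb a := by
  refine prod_congr rfl fun i hi => ?_
  rw [h i hi]
  exact hM.cpt_pa i w a _ (by simp [hM.pa_exo i hi])

/-- Exogenous variables are roots, so conditioning on their values amounts to an intervention. -/
theorem WF.ite_pdo_eq_exoProb_mul_pdo (hM : M.WF) {X S : Finset ν} (hX : ∀ i ∈ X, i ∉ M.exo)
    (hS : ∀ i, i ∈ S ↔ i ∈ M.exo ∨ i ∈ X) {xv a s : Asg Val} (hsU : ∀ i ∈ M.exo, s i = a i)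
    (hsX : ∀ i ∈ X, s i = xv i) (w : Asg Val) :
    (if ∀ i ∈ M.exo, w i = a i then M.pdo X xv w else 0) = M.exoProb a * M.pdo S s w := by
  have clamped_iff : (∀ i ∈ S, w i = s i) ↔
      (∀ i ∈ M.exo, w i = a i) ∧ ∀ i ∈ X, w i = xv i := by
    simp only [hS, or_imp, forall_and]
    exact and_congr (forall₂_congr fun i hi => by rw [hsU i hi])
      (forall₂_congr fun i hi => by rw [hsX i hi])
  have compl_eq : Xᶜ = M.exo ∪ Sᶜ := by
    ext i
    have := hX i
    simp only [mem_compl, mem_union, hS]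
    tauto
  have disjoint_compl : Disjoint M.exo Sᶜ :=
    disjoint_compl_right.mono_left fun i hi => (hS i).mpr (.inl hi)
  simp only [pdo, clamped_iff, ite_and]
  split_ifs with hexo hclamp
  · rw [← hM.exoProb_congr hexo, exoProb, compl_eq, prod_union disjoint_compl]
  all_goals simp only [mul_zero]

theorem WF.cfBasic_eq_sum_pdo (hM : M.WF) {X S : Finset ν} (hX : ∀ i ∈ X, i ∉ M.exo)
    (hS : ∀ i, i ∈ S ↔ i ∈ M.exo ∨ i ∈ X) {xv a s : Asg Val} (hsU : ∀ i ∈ M.exo, s i = a i)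
    (hsX : ∀ i ∈ X, s i = xv i) (ha : M.exoProb a ≠ 0) (Y : Finset ν) (yv : Asg Val) :
    M.cfBasic X xv Y yv a = ∑ w, if ∀ i ∈ Y, w i = yv i then M.pdo S s w else 0 := by
  simp only [cfBasic, and_comm (a := ∀ i ∈ M.exo, _), ite_and,
    hM.ite_pdo_eq_exoProb_mul_pdo hX hS hsU hsX, ← mul_sum, hM.sum_pdo, ← mul_ite_zero]
  rw [mul_one, mul_div_cancel_left₀ _ ha]

theorem WF.refine (hM : M.WF) (a : Asg Val) : (M.refine a).WF where
  pa_exo := hM.pa_exo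
  acyclic := hM.acyclic
  cpt_pa i w w' x (h : ∀ j ∈ M.pa i, w j = w' j) := by
    have agrees_iff : (∀ j ∈ M.pa i, w j = a j) ↔ ∀ j ∈ M.pa i, w' j = a j :=
      forall₂_congr fun j hj => by rw [h j hj]
    simp only [CM.refine, agrees_iff, hM.cpt_pa i w w' x h]
  cpt_nonneg i w x := by
    simp only [CM.refine]
    split_ifs
    exacts [zero_le_one, le_rfl, hM.cpt_nonneg i w x]
  cpt_sum i w := by
    simp only [CM.refine]
    split_ifs
    · simp
    · exact hM.cpt_sum i w

end TruncatedFactorization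

/-! ### Potential outcomes -/

section ParentValues

variable {ν : Type} {Val : ν → Type}

/-- The values that the world `w` gives to the parents of `i`. -/
def restrictPa (M : CM ν Val) (i : ν) (w : Asg Val) : M.PaAsg i := fun k => w k.1

theorem restrictPa_eq_iff {M : CM ν Val} {i : ν} {w w' : Asg Val} :
    M.restrictPa i w = M.restrictPa i w' ↔ ∀ j ∈ M.pa i, w j = w' j :=
  ⟨fun h j hj => congrFun h ⟨j, hj⟩, fun h => funext fun k => h k.1 k.2⟩

/-- `M.Solves φ X w` says that the world `w` satisfies the structural equations of the PO-SCM of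
`M` with potential outcomes `φ`, except possibly those of the variables in `X`. -/
def Solves (M : CM ν Val) (φ : Asg (POB M)) (X : Finset ν) (w : Asg Val) : Prop :=
  ∀ j : {i : ν // i ∉ M.exo}, j.1 ∉ X → w j.1 = φ ⟨j, M.restrictPa j.1 w⟩

variable [∀ i, Fintype (Val i)]

/-- The values of the potential outcome `p` under which the world `w` satisfies the structural
equation that reads `p`, where the equations of the variables in `X` have been removed. -/
def admissibleValues (M : CM ν Val) (X : Finset ν) (w : Asg Val) (p : POI M) :
    Finset (Val p.1.1) :=
  if p.2 = M.restrictPa p.1.1 w ∧ p.1.1 ∉ X then {w p.1.1} else univ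

theorem mem_admissibleValues {M : CM ν Val} {X : Finset ν} {w : Asg Val} {p : POI M}
    {x : Val p.1.1} :
    x ∈ M.admissibleValues X w p ↔ p.2 = M.restrictPa p.1.1 w → p.1.1 ∉ X → w p.1.1 = x := by
  rw [admissibleValues, ← and_imp]
  split_ifs with hp
  · rw [mem_singleton, forall_prop_of_true hp, eq_comm]
  · simp only [mem_univ, hp, false_imp_iff]

theorem solves_iff_forall_mem_admissibleValues {M : CM ν Val} {φ : Asg (POB M)} {X : Finset ν}
    {w : Asg Val} : M.Solves φ X w ↔ ∀ p : POI M, φ p ∈ M.admissibleValues X w p := by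
  constructor
  · rintro h ⟨j, κ⟩
    exact mem_admissibleValues.mpr fun (hκ : κ = M.restrictPa j.1 w) hX => hκ ▸ h j hX
  · exact fun h j hX => mem_admissibleValues.mp (h ⟨j, M.restrictPa j.1 w⟩) rfl hX

end ParentValues

section PotentialOutcomes

variable {ν : Type} {Val : ν → Type} [Fintype ν] [∀ i, Fintype (Val i)] {M : CM ν Val}

theorem prod_POI (f : POI M → ℝ) :
    ∏ p, f p = ∏ j : {i : ν // i ∉ M.exo}, ∏ κ : M.PaAsg j.1, f ⟨j, κ⟩ :=
  Fintype.prod_sigma (α := fun j : {i : ν // i ∉ M.exo} => M.PaAsg j.1) f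

theorem prod_POI_ite (M : CM ν Val) (X : Finset ν) (w : Asg Val) (f : ν → ℝ) :
    (∏ p : POI M, if p.2 = M.restrictPa p.1.1 w ∧ p.1.1 ∉ X then f p.1.1 else 1) =
      ∏ i ∈ (M.exo ∪ X)ᶜ, f i :=
  calc
    _ = ∏ j : {i : ν // i ∉ M.exo}, ∏ κ : M.PaAsg j.1,
          if κ = M.restrictPa j.1 w ∧ j.1 ∉ X then f j.1 else 1 := by rw [prod_POI]
    _ = ∏ j : {i : ν // i ∉ M.exo}, if j.1 ∉ X then f j.1 else 1 := by
      simp only [ite_and, prod_ite_eq', mem_univ, if_true]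
    _ = ∏ i ∈ M.exoᶜ, if i ∉ X then f i else 1 :=
      (prod_subtype M.exoᶜ (fun _ => mem_compl) fun i => if i ∉ X then f i else 1).symm
    _ = ∏ i ∈ (M.exo ∪ X)ᶜ, f i := by
      rw [← prod_filter]
      congr 1
      ext i
      simp only [mem_filter, mem_compl, mem_union, not_or]

variable [∀ i, Nonempty (Val i)]

/-- The probability that the potential outcome variables take the values `φ`. -/
def poProb (M : CM ν Val) (φ : Asg (POB M)) : ℝ :=
  ∏ p : POI M, M.cpt p.1.1 (M.extendPa p.1.1 p.2) (φ p)

theorem WF.cpt_extendPa_restrictPa (hM : M.WF) (i : ν) (w : Asg Val) (x : Val i) :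
    M.cpt i (M.extendPa i (M.restrictPa i w)) x = M.cpt i w x :=
  hM.cpt_pa _ _ _ _ fun j hj => by simp only [extendPa, dif_pos hj, restrictPa]

theorem WF.sum_admissibleValues (hM : M.WF) (X : Finset ν) (w : Asg Val) (p : POI M) :
    ∑ x ∈ M.admissibleValues X w p, M.cpt p.1.1 (M.extendPa p.1.1 p.2) x =
      if p.2 = M.restrictPa p.1.1 w ∧ p.1.1 ∉ X then M.cpt p.1.1 w (w p.1.1) else 1 := by
  rw [admissibleValues]
  split_ifs with hp
  · rw [sum_singleton, hp.1, hM.cpt_extendPa_restrictPa]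
  · exact hM.cpt_sum _ _

/-- If the worlds `a` and `w` read the same potential outcome, it has to give both of their values,
which is the point mass in the refinement at `a`. -/
theorem WF.sum_admissibleValues_inter (hM : M.WF) (X : Finset ν) (a w : Asg Val) (p : POI M) :
    ∑ x ∈ M.admissibleValues ∅ a p ∩ M.admissibleValues X w p,
        M.cpt p.1.1 (M.extendPa p.1.1 p.2) x =
      (if p.2 = M.restrictPa p.1.1 a ∧ p.1.1 ∉ (∅ : Finset ν) then M.cpt p.1.1 a (a p.1.1)
        else 1) *
      if p.2 = M.restrictPa p.1.1 w ∧ p.1.1 ∉ X then (M.refine a).cpt p.1.1 w (w p.1.1)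
        else 1 := by
  by_cases hw : p.2 = M.restrictPa p.1.1 w ∧ p.1.1 ∉ X
  · by_cases ha : p.2 = M.restrictPa p.1.1 a
    · have refine_cpt : (M.refine a).cpt p.1.1 w (w p.1.1) = if w p.1.1 = a p.1.1 then 1 else 0 :=
        if_pos ⟨p.1.2, restrictPa_eq_iff.mp (hw.1.symm.trans ha)⟩
      rw [admissibleValues, admissibleValues, if_pos hw, if_pos ⟨ha, notMem_empty _⟩,
        if_pos hw, if_pos ⟨ha, notMem_empty _⟩, refine_cpt, mul_ite_zero, mul_one]
      split_ifs with hwa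
      · rw [hwa, inter_self, sum_singleton, ha, hM.cpt_extendPa_restrictPa]
      · rw [singleton_inter_of_notMem (by simpa using Ne.symm hwa), sum_empty]
    · have refine_cpt : (M.refine a).cpt p.1.1 w (w p.1.1) = M.cpt p.1.1 w (w p.1.1) :=
        if_neg fun h => ha (hw.1.trans (restrictPa_eq_iff.mpr h.2))
      have admissible_univ : M.admissibleValues ∅ a p = univ := if_neg fun h => ha h.1
      rw [admissible_univ, univ_inter, hM.sum_admissibleValues, refine_cpt,
        if_neg (fun h => ha h.1 : ¬(p.2 = M.restrictPa p.1.1 a ∧ _)), one_mul]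
  · have admissible_univ : M.admissibleValues X w p = univ := if_neg hw
    rw [admissible_univ, inter_univ, hM.sum_admissibleValues, if_neg hw, mul_one]

/-- Potential outcomes are independent, so the probability factors over them. -/
theorem WF.sum_poProb_solves (hM : M.WF) (X : Finset ν) (a w : Asg Val) :
    ∑ φ with M.Solves φ ∅ a ∧ M.Solves φ X w, M.poProb φ =
      (∏ i ∈ M.exoᶜ, M.cpt i a (a i)) * ∏ i ∈ (M.exo ∪ X)ᶜ, (M.refine a).cpt i w (w i) := by
  let A (p : POI M) : Finset (POB M p) := M.admissibleValues ∅ a p ∩ M.admissibleValues X w p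
  have solves_iff (φ : Asg (POB M)) : M.Solves φ ∅ a ∧ M.Solves φ X w ↔ φ ∈ Fintype.piFinset A := by
    simp only [solves_iff_forall_mem_admissibleValues, ← forall_and, Fintype.mem_piFinset]
    exact forall_congr' fun p => mem_inter.symm
  calc
    _ = ∑ φ ∈ Fintype.piFinset A, M.poProb φ := by
      simp only [solves_iff, filter_univ_mem]
    _ = ∏ p : POI M, ∑ x ∈ A p, M.cpt p.1.1 (M.extendPa p.1.1 p.2) x :=
      (prod_univ_sum A fun (p : POI M) x => M.cpt p.1.1 (M.extendPa p.1.1 p.2) x).symm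
    _ = _ := (Fintype.prod_congr _ _ (hM.sum_admissibleValues_inter X a w)).trans prod_mul_distrib
    _ = _ := by
      rw [prod_POI_ite M _ _ fun i => M.cpt i a (a i),
        prod_POI_ite M _ _ fun i => (M.refine a).cpt i w (w i), union_empty]

end PotentialOutcomes

end CM

/-! ### The PO-SCM -/

section JoinAsg

variable {ν β : Type} {Val : ν → Type} {B : β → Type}

/-- The assignment on the extended signature `ν ⊕ β` with components `a` and `φ`. -/
def joinAsg (a : Asg Val) (φ : Asg B) : Asg (SumVal Val B)
  | .inl j => a j
  | .inr b => φ b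

/-- The last instance is arbitrary because there are two decidable equalities on `ν ⊕ β`. -/
theorem sum_joinAsg {α : Type*} [AddCommMonoid α] [Fintype (Asg Val)] [Fintype (Asg B)]
    {_ : Fintype (Asg (SumVal Val B))} (f : Asg (SumVal Val B) → α) :
    ∑ w, f w = ∑ a, ∑ φ, f (joinAsg a φ) := by
  rw [← Fintype.sum_prod_type' fun a φ => f (joinAsg a φ)]
  refine (Fintype.sum_bijective (fun q : Asg Val × Asg B => joinAsg q.1 q.2) ?_ _ _
    fun _ => rfl).symm
  refine Function.bijective_iff_has_inverse.mpr
    ⟨fun w => (fun j => w (.inl j), fun b => w (.inr b)), fun _ => rfl, fun w => ?_⟩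
  funext i
  cases i <;> rfl

theorem forall_mem_image_inl_joinAsg [∀ b, Nonempty (B b)] {_ : DecidableEq (ν ⊕ β)}
    {Z : Finset ν} {a zv : Asg Val} {φ : Asg B} :
    (∀ i ∈ Z.image Sum.inl, joinAsg a φ i = liftAsg zv i) ↔ ∀ i ∈ Z, a i = zv i :=
  forall_mem_image

end JoinAsg

namespace CM

section StructuralModel

variable {ν : Type} {Val : ν → Type} [Fintype ν]

theorem joint_eq_exoProb_mul_pdo (M : CM ν Val) (w : Asg Val) :
    M.joint w = M.exoProb w * M.pdo M.exo w w := by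
  rw [pdo, if_pos fun _ _ => rfl, exoProb, prod_mul_prod_compl, joint]

theorem IsSCM.pdo_eq_ite {M : CM ν Val} (hM : M.IsSCM) {X : Finset ν} (hX : M.exo ⊆ X)
    (xv w : Asg Val) :
    M.pdo X xv w =
      if (∀ i ∈ X, w i = xv i) ∧ ∀ i ∉ X, M.cpt i w (w i) = 1 then 1 else 0 := by
  rw [pdo, ite_and]
  split_ifs with hclamp hone
  · exact prod_eq_one fun i hi => hone i (mem_compl.mp hi)
  · push Not at hone
    obtain ⟨i, hi, hne⟩ := hone
    exact prod_eq_zero (mem_compl.mpr hi) ((hM i (fun h => hi (hX h)) w (w i)).resolve_right hne)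
  · rfl

end StructuralModel

section POSCM

variable {ν : Type} {Val : ν → Type} {M : CM ν Val}

theorem solves_exo_union {φ : Asg (POB M)} {X : Finset ν} {w : Asg Val} :
    M.Solves φ (M.exo ∪ X) w ↔ M.Solves φ X w :=
  forall_congr' fun j => by simp only [mem_union, j.2, false_or]

variable [Fintype ν] [∀ i, Fintype (Val i)] [∀ i, Nonempty (Val i)]

theorem inl_mem_exo_MN {i : ν} : .inl i ∈ M.MN.exo ↔ i ∈ M.exo := by
  simp [MN]

theorem inr_mem_exo_MN (p : POI M) : .inr p ∈ M.MN.exo := by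
  simp [MN]

theorem cpt_MN_inl {j : ν} (hj : j ∉ M.exo) (w : Asg (SumVal Val (POB M)))
    (x : SumVal Val (POB M) (.inl j)) :
    M.MN.cpt (.inl j) w x =
      if x = w (.inr ⟨⟨j, hj⟩, M.restrictPa j fun k => w (.inl k)⟩) then 1 else 0 :=
  dif_neg hj

theorem isSCM_MN (M : CM ν Val) : M.MN.IsSCM := by
  rintro (j | p) hi w x
  · rw [cpt_MN_inl (mt inl_mem_exo_MN.mpr hi)]
    exact (ite_eq_or_eq _ _ _).symm
  · exact absurd (inr_mem_exo_MN p) hi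

theorem inl_mem_pa_MN_inl {j k : ν} : .inl k ∈ M.MN.pa (.inl j) ↔ k ∈ M.pa j := by
  simp [MN]

theorem inr_mem_pa_MN_inl {j : ν} {p : POI M} : .inr p ∈ M.MN.pa (.inl j) ↔ p.1.1 = j := by
  simp [MN]

theorem WF.MN (hM : M.WF) : M.MN.WF where
  pa_exo := by
    rintro (j | p) hi
    · have hj := inl_mem_exo_MN.mp hi
      refine eq_empty_of_forall_notMem ?_
      rintro (k | q) h
      · exact notMem_empty k (hM.pa_exo j hj ▸ inl_mem_pa_MN_inl.mp h)
      · exact q.1.2 (inr_mem_pa_MN_inl.mp h ▸ hj)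
    · rfl
  acyclic := by
    rintro (j | p) (k | q) h
    · exact Nat.succ_lt_succ (hM.acyclic j k (inl_mem_pa_MN_inl.mp h))
    · exact Nat.succ_pos _
    all_goals exact absurd h (notMem_empty _)
  cpt_pa := by
    rintro (j | p) w w' x h
    · have pa_eq (k : ν) (hk : k ∈ M.pa j) : w (.inl k) = w' (.inl k) :=
        h _ (inl_mem_pa_MN_inl.mpr hk)
      by_cases hj : j ∈ M.exo
      · simp only [CM.MN, dif_pos hj]
        exact hM.cpt_pa j _ _ x pa_eq
      · have po_eq := h (.inr ⟨⟨j, hj⟩, M.restrictPa j fun k => w' (.inl k)⟩)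
          (inr_mem_pa_MN_inl.mpr rfl)
        rw [cpt_MN_inl hj, cpt_MN_inl hj, restrictPa_eq_iff.mpr pa_eq, po_eq]
    · rfl
  cpt_nonneg := by
    rintro (j | p) w x
    · simp only [CM.MN]
      split_ifs
      exacts [hM.cpt_nonneg _ _ _, zero_le_one, le_rfl]
    · exact hM.cpt_nonneg _ _ _
  cpt_sum := by
    rintro (j | p) w
    · by_cases hj : j ∈ M.exo
      · simp only [CM.MN, dif_pos hj]
        exact hM.cpt_sum _ _
      · simp only [cpt_MN_inl hj]
        exact Fintype.sum_ite_eq' _ _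
    · exact hM.cpt_sum _ _

theorem exo_MN : M.MN.exo = M.exo.disjSum univ := by
  ext i
  cases i <;> simp [MN]

theorem exoProb_MN (a : Asg Val) (φ : Asg (POB M)) :
    M.MN.exoProb (joinAsg a φ) = M.exoProb a * M.poProb φ := by
  rw [exoProb, exo_MN, prod_disjSum]
  congr 1
  exact prod_congr rfl fun i hi => dif_pos hi

theorem forall_notMem_cpt_MN_eq_one_iff {X : Finset ν} (hX : M.exo ⊆ X) (φ : Asg (POB M))
    (w : Asg Val) :
    (∀ i ∉ X.disjSum univ, M.MN.cpt i (joinAsg w φ) (joinAsg w φ i) = 1) ↔ M.Solves φ X w := by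
  constructor
  · intro h j hj
    have hone := h (.inl j.1) (mt inl_mem_disjSum.mp hj)
    rw [cpt_MN_inl j.2] at hone
    by_contra hne
    exact zero_ne_one ((if_neg hne).symm.trans hone)
  · rintro h (j | p) hi
    · have hjX : j ∉ X := mt inl_mem_disjSum.mpr hi
      have hj : j ∉ M.exo := fun hj => hjX (hX hj)
      rw [cpt_MN_inl hj]
      exact if_pos (h ⟨j, hj⟩ hjX)
    · exact absurd (inr_mem_disjSum.mpr (mem_univ p)) hi

theorem pdo_MN_joinAsg {X : Finset ν} (hX : M.exo ⊆ X) (xv w : Asg Val) (φ ψ : Asg (POB M)) :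
    M.MN.pdo (X.disjSum univ) (joinAsg xv φ) (joinAsg w ψ) =
      if ψ = φ then if (∀ i ∈ X, w i = xv i) ∧ M.Solves φ X w then 1 else 0 else 0 := by
  have exo_subset : M.MN.exo ⊆ X.disjSum univ := by
    rw [exo_MN]
    exact disjSum_mono hX subset_rfl
  have clamped_iff : (∀ i ∈ X.disjSum univ, joinAsg w ψ i = joinAsg xv φ i) ↔
      ψ = φ ∧ ∀ i ∈ X, w i = xv i := by
    constructor
    · exact fun h => ⟨funext fun p => h (.inr p) (inr_mem_disjSum.mpr (mem_univ p)),
        fun i hi => h (.inl i) (inl_mem_disjSum.mpr hi)⟩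
    · rintro ⟨rfl, h⟩ (i | p) hi
      · exact h i (inl_mem_disjSum.mp hi)
      · rfl
  rw [M.isSCM_MN.pdo_eq_ite exo_subset]
  by_cases hφ : ψ = φ
  · subst hφ
    simp only [forall_notMem_cpt_MN_eq_one_iff hX, clamped_iff, true_and, if_true]
  · simp only [clamped_iff, hφ, false_and, if_false]

theorem joint_MN_joinAsg (a : Asg Val) (φ : Asg (POB M)) :
    M.MN.joint (joinAsg a φ) =
      M.exoProb a * M.poProb φ * if M.Solves φ ∅ a then 1 else 0 := by
  have solves_exo : M.Solves φ M.exo a ↔ M.Solves φ ∅ a := by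
    rw [← solves_exo_union (X := ∅), union_empty]
  rw [joint_eq_exoProb_mul_pdo, exoProb_MN, exo_MN, pdo_MN_joinAsg subset_rfl]
  simp only [implies_true, true_and, if_true, solves_exo]

theorem WF.cfBasic_MN_joinAsg (hM : M.WF) {X : Finset ν} (hX : ∀ i ∈ X, i ∉ M.exo) (xv : Asg Val)
    (Y : Finset ν) (yv : Asg Val) {a : Asg Val} (ha : M.exoProb a ≠ 0) {φ : Asg (POB M)}
    (hφ : M.poProb φ ≠ 0) :
    M.MN.cfBasic (X.image .inl) (liftAsg xv) (Y.image .inl) (liftAsg yv) (joinAsg a φ) =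
      ∑ w, if ∀ i ∈ Y, w i = yv i then
        if (∀ i ∈ M.exo ∪ X, w i = X.piecewise xv a i) ∧ M.Solves φ X w then 1 else 0 else 0 := by
  have hX' : ∀ i ∈ X.image .inl, i ∉ M.MN.exo :=
    forall_mem_image.mpr fun i hi => mt inl_mem_exo_MN.mp (hX i hi)
  have hS (i : ν ⊕ POI M) :
      i ∈ (M.exo ∪ X).disjSum univ ↔ i ∈ M.MN.exo ∨ i ∈ X.image .inl := by
    cases i <;> simp [exo_MN]
  have hsU (i : ν ⊕ POI M) (hi : i ∈ M.MN.exo) :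
      joinAsg (X.piecewise xv a) φ i = joinAsg a φ i := by
    cases i with
    | inl j => exact piecewise_eq_of_notMem _ _ _ fun hj => hX j hj (inl_mem_exo_MN.mp hi)
    | inr p => rfl
  have hsX : ∀ i ∈ X.image .inl, joinAsg (X.piecewise xv a) φ i = liftAsg xv i :=
    forall_mem_image_inl_joinAsg.mpr fun i hi => piecewise_eq_of_mem _ _ _ hi
  rw [hM.MN.cfBasic_eq_sum_pdo hX' hS hsU hsX (exoProb_MN a φ ▸ mul_ne_zero ha hφ), sum_joinAsg]
  refine sum_congr rfl fun w _ => ?_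
  simp only [forall_mem_image_inl_joinAsg, pdo_MN_joinAsg subset_union_left, solves_exo_union]
  split_ifs <;> simp

theorem WF.sum_MN_joint (hM : M.WF) (a : Asg Val) :
    ∑ φ, M.MN.joint (joinAsg a φ) = M.joint a := by
  have solves_univ (φ : Asg (POB M)) : M.Solves φ univ a := fun j hj => absurd (mem_univ j.1) hj
  have compl_eq_empty : (M.exo ∪ univ)ᶜ = ∅ := by simp
  have sum_poProb := hM.sum_poProb_solves univ a a
  rw [compl_eq_empty, prod_empty, mul_one] at sum_poProb
  simp only [solves_univ, and_true] at sum_poProb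
  simp only [joint_MN_joinAsg, mul_ite_zero, mul_one, ← sum_filter, ← mul_sum, sum_poProb]
  rw [exoProb, prod_mul_prod_compl, joint]

theorem WF.sum_MN_cfBasic_mul_joint (hM : M.WF) {X : Finset ν} (hX : ∀ i ∈ X, i ∉ M.exo)
    (xv : Asg Val) (Y : Finset ν) (yv a : Asg Val) :
    ∑ φ, M.MN.cfBasic (X.image .inl) (liftAsg xv) (Y.image .inl) (liftAsg yv) (joinAsg a φ) *
        M.MN.joint (joinAsg a φ) =
      M.pbBasic a X xv Y yv * M.joint a := by
  by_cases ha : M.exoProb a = 0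
  · simp only [joint_MN_joinAsg, joint_eq_exoProb_mul_pdo M a, ha, zero_mul, mul_zero,
      sum_const_zero]
  have hsU (i : ν) (hi : i ∈ M.exo) : X.piecewise xv a i = a i :=
    piecewise_eq_of_notMem _ _ _ fun hiX => hX i hiX hi
  have pbBasic_eq : M.pbBasic a X xv Y yv = ∑ w, if ∀ i ∈ Y, w i = yv i then
      (M.refine a).pdo (M.exo ∪ X) (X.piecewise xv a) w else 0 :=
    (hM.refine a).cfBasic_eq_sum_pdo hX (fun _ => mem_union) hsU
      (fun _ hi => piecewise_eq_of_mem _ _ _ hi) (by rwa [exoProb_refine]) Y yv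
  have term_eq (φ : Asg (POB M)) :
      M.MN.cfBasic (X.image .inl) (liftAsg xv) (Y.image .inl) (liftAsg yv) (joinAsg a φ) *
        M.MN.joint (joinAsg a φ) =
      ∑ w, if (∀ i ∈ Y, w i = yv i) ∧ ∀ i ∈ M.exo ∪ X, w i = X.piecewise xv a i then
        M.exoProb a * if M.Solves φ ∅ a ∧ M.Solves φ X w then M.poProb φ else 0 else 0 := by
    by_cases hφ : M.poProb φ = 0
    · simp [joint_MN_joinAsg, hφ]
    · rw [hM.cfBasic_MN_joinAsg hX xv Y yv ha hφ, joint_MN_joinAsg, sum_mul]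
      refine sum_congr rfl fun w _ => ?_
      split_ifs <;> simp_all
  rw [sum_congr rfl fun φ _ => term_eq φ, sum_comm, pbBasic_eq, sum_mul]
  refine sum_congr rfl fun w _ => ?_
  simp only [ite_and, pdo]
  split_ifs
  · simp only [← ite_and, ← sum_filter, ← mul_sum]
    rw [hM.sum_poProb_solves, ← mul_assoc, exoProb, prod_mul_prod_compl, joint, mul_comm]
  all_goals simp

end POSCM

end CM

theorem pbCond_eq_pnCond_general {ν : Type} {Val : ν → Type} [Fintype ν] [∀ i, Fintype (Val i)]
    [∀ i, Nonempty (Val i)] (M : CM ν Val) (hM : M.WF) (X : Finset ν) (hX : ∀ i ∈ X, i ∉ M.exo)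
    (xv : Asg Val) (Y : Finset ν) (yv : Asg Val) (Z : Finset ν) (zv : Asg Val)
    (_hz : 0 < ∑ w : Asg Val, if ∀ i ∈ Z, w i = zv i then M.joint w else 0) :
    M.pbProbCond [⟨X, xv, Y, yv⟩] Z zv = M.pnProbCond [⟨X, xv, Y, yv⟩] Z zv := by
  simp only [CM.pbProbCond, CM.pnProbCond, extProbCond, CM.cfProbCond, sum_joinAsg,
    List.map_cons, List.map_nil, List.prod_cons, List.prod_nil, mul_one, liftCFEvent,
    forall_mem_image_inl_joinAsg]
  congr 1
  · refine sum_congr rfl fun a _ => ?_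
    split_ifs
    · exact (hM.sum_MN_cfBasic_mul_joint hX xv Y yv a).symm
    · simp only [zero_mul, sum_const_zero]
  · refine sum_congr rfl fun a _ => ?_
    split_ifs
    · exact (hM.sum_MN_joint a).symm
    · exact sum_const_zero.symm

/-- **Proposition 2.** Given a causal model `M`, for all `Y, X, Z ⊆ V`, `y ∈ R(Y)`,
`x ∈ R(X)`, `z ∈ R(Z)` with `P_M(z) > 0`: the conditional B-probability of the basic
counterfactual equals the conditional probability computed in the PO-SCM:
`P^B(y_x | z) = P^N(y_x | z)`. -/
theorem pbCond_eq_pnCond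
    {ν : Type} {Val : ν → Type} [Fintype ν] [∀ i, Fintype (Val i)] [∀ i, Nonempty (Val i)]
    (M : CM ν Val) (hM : M.WF)
    (X : Finset ν) (hX : ∀ i ∈ X, i ∉ M.exo) (xv : Asg Val)
    (Y : Finset ν) (hY : ∀ i ∈ Y, i ∉ M.exo) (yv : Asg Val)
    (Z : Finset ν) (hZ : ∀ i ∈ Z, i ∉ M.exo) (zv : Asg Val)
    (hz : 0 < ∑ w : Asg Val, if ∀ i ∈ Z, w i = zv i then M.joint w else 0) :
    M.pbProbCond [⟨X, xv, Y, yv⟩] Z zv = M.pnProbCond [⟨X, xv, Y, yv⟩] Z zv :=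
  pbCond_eq_pnCond_general M hM X hX xv Y yv Z zv hz

end
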